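/- For every n ∈ ℕ, n ≥ 1, the improper integral ∫₀^∞ Im[J_{in/2}(x)²] dx converges and (1/sinh(πn/2)) · ∫₀^∞ Im[J_{in/2}(x)²] dx = − 1/(2·cosh(πn/2)). -/

import Mathlib

open MeasureTheory Filter Topology

/-- Bessel function of the first kind of complex order `ν` at real `x > 0`. -/
noncomputable def besselJ (ν : ℂ) (x : ℝ) : ℂ :=
  ∑' k : ℕ, ((-1 : ℂ) ^ k * Complex.exp ((ν + 2 * k) * (Real.log (x / 2) : ℂ))) /
    ((Nat.factorial k : ℂ) * Complex.Gamma (ν + k + 1))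

/-- Bessel function of the second kind of complex order `ν` at real `x > 0`. -/
noncomputable def besselY (ν : ℂ) (x : ℝ) : ℂ :=
  (besselJ ν x * Complex.cos (Real.pi * ν) - besselJ (-ν) x) / Complex.sin (Real.pi * ν)

/-- Bessel function of the first kind of order `0` (real-valued). -/
noncomputable def besselJ0 (x : ℝ) : ℝ :=
  ∑' k : ℕ, (-1 : ℝ) ^ k * (x / 2) ^ (2 * k) / (Nat.factorial k : ℝ) ^ 2

/-- Lommel function `S_{-1,0}` for `x > 0`. -/
noncomputable def lommelS (x : ℝ) : ℝ :=
  ∫ t in Set.Ioi (0 : ℝ), t * Real.exp (-x * Real.sinh t)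

/-- Struve function `K₀` for `x > 0`. -/
noncomputable def struveK0 (x : ℝ) : ℝ :=
  (2 / Real.pi) * ∫ t in Set.Ioi (0 : ℝ), Real.exp (-x * Real.sinh t)

/-- Bessel function of the second kind of order `0` (real-valued, for `x > 0`). -/
noncomputable def besselY0 (x : ℝ) : ℝ :=
  (2 / Real.pi) * ((Real.log (x / 2) + Real.eulerMascheroniConstant) * besselJ0 x +
    ∑' k : ℕ, (-1 : ℝ) ^ k * ((harmonic (k + 1) : ℚ) : ℝ) * (x / 2) ^ (2 * (k + 1)) /
      (Nat.factorial (k + 1) : ℝ) ^ 2)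

/-- Struve function `H₀`: `H₀ = K₀ˢ + Y₀`. -/
noncomputable def struveH0 (x : ℝ) : ℝ := struveK0 x + besselY0 x

noncomputable def bF (ν q : ℂ) : ℂ := ∑' k : ℕ, q ^ k / ((Nat.factorial k : ℂ) * Complex.Gamma (ν + k + 1))

lemma bGamma_ne (ν : ℂ) (hν : 0 ≤ ν.re) (k : ℕ) : Complex.Gamma (ν + k + 1) ≠ 0 := by
  apply Complex.Gamma_ne_zero_of_re_pos
  simp
  positivity

lemma bGamma_succ (ν : ℂ) (hν : 0 ≤ ν.re) (k : ℕ) :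
    Complex.Gamma (ν + (k + 1 : ℕ) + 1) = (ν + k + 1) * Complex.Gamma (ν + k + 1) := by
  have h : ν + k + 1 ≠ 0 := by
    intro h
    have := congrArg Complex.re h
    simp at this
    have : (0:ℝ) ≤ k := Nat.cast_nonneg k
    linarith
  rw [← Complex.Gamma_add_one _ h]
  push_cast
  ring_nf

lemma bGamma_lower (ν : ℂ) (hν : 0 ≤ ν.re) (k : ℕ) :
    ‖Complex.Gamma (ν + 1)‖ ≤ ‖Complex.Gamma (ν + k + 1)‖ := by
  induction k with
  | zero => simp
  | succ k ih =>
    rw [bGamma_succ ν hν, norm_mul]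
    have h1 : 1 ≤ ‖ν + k + 1‖ := by
      refine le_trans ?_ (Complex.re_le_norm _)
      simp
      positivity
    nlinarith [norm_nonneg (Complex.Gamma (ν + k + 1))]

lemma bF_bound (ν : ℂ) (hν : 0 ≤ ν.re) (R : ℝ) (q : ℂ) (hq : ‖q‖ ≤ R) (k : ℕ) :
    ‖q ^ k / ((Nat.factorial k : ℂ) * Complex.Gamma (ν + k + 1))‖ ≤
      R ^ k / (Nat.factorial k) * ‖Complex.Gamma (ν + 1)‖⁻¹ := by
  have h0 : 0 < ‖Complex.Gamma (ν + 1)‖ := by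
    have := bGamma_ne ν hν 0
    simpa using this
  rw [norm_div, norm_mul, norm_pow, Complex.norm_natCast, div_mul_eq_div_div, div_eq_mul_inv _ ‖_‖]
  have := bGamma_lower ν hν k
  have hR : 0 ≤ R := (norm_nonneg q).trans hq
  gcongr

lemma bF_summ_bound (C R : ℝ) : Summable (fun k : ℕ => R ^ k / (Nat.factorial k) * C) :=
  (Real.summable_pow_div_factorial R).mul_right _

lemma bF_summable (ν : ℂ) (hν : 0 ≤ ν.re) (q : ℂ) :
    Summable (fun k : ℕ => q ^ k / ((Nat.factorial k : ℂ) * Complex.Gamma (ν + k + 1))) :=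
  Summable.of_norm_bounded (bF_summ_bound _ ‖q‖) (bF_bound ν hν ‖q‖ q le_rfl)

lemma bF_hasDerivAt (ν : ℂ) (hν : 0 ≤ ν.re) (q : ℂ) : HasDerivAt (bF ν) (bF (ν + 1) q) q := by
  have hU : IsOpen (Metric.ball (0:ℂ) (‖q‖ + 1)) := Metric.isOpen_ball
  have hq : q ∈ Metric.ball (0:ℂ) (‖q‖ + 1) := by simp
  have hd : ∀ i : ℕ, DifferentiableOn ℂ (fun q : ℂ => q ^ i / ((Nat.factorial i : ℂ) * Complex.Gamma (ν + i + 1)))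
      (Metric.ball (0:ℂ) (‖q‖ + 1)) := fun i => by fun_prop
  have hb : ∀ i : ℕ, ∀ w ∈ Metric.ball (0:ℂ) (‖q‖ + 1), ‖w ^ i / ((Nat.factorial i : ℂ) * Complex.Gamma (ν + i + 1))‖ ≤ _ :=
    fun i w hw => bF_bound ν hν (‖q‖ + 1) w (by simp at hw; exact hw.le) i
  have h1 := Complex.differentiableOn_tsum_of_summable_norm (bF_summ_bound _ _) hd hU hb
  have h2 := Complex.hasSum_deriv_of_summable_norm (bF_summ_bound _ _) hd hU hb hq
  have h3 := (h1.differentiableAt (hU.mem_nhds hq)).hasDerivAt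
  have h4 : deriv (fun w : ℂ => ∑' i : ℕ, w ^ i / ((Nat.factorial i : ℂ) * Complex.Gamma (ν + i + 1))) q
      = bF (ν + 1) q := by
    rw [← h2.tsum_eq, h2.summable.tsum_eq_zero_add]
    unfold bF
    simp only [deriv_div_const, deriv_pow_field]
    simp
    apply tsum_congr
    intro k
    rw [Nat.factorial_succ]
    have e : ν + (k + 1) + 1 = ν + 1 + k + 1 := by ring
    rw [e]
    have : (k : ℂ) + 1 ≠ 0 := by exact_mod_cast Nat.succ_ne_zero k
    push_cast
    field_simp
  rw [h4] at h3
  exact h3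

lemma bF_rec (ν : ℂ) (hν : 0 ≤ ν.re) (q : ℂ) :
    q * bF (ν + 2) q + (ν + 1) * bF (ν + 1) q = bF ν q := by
  have s0 := bF_summable ν hν q
  have s1 := bF_summable (ν + 1) (by simp; linarith) q
  have s2 := bF_summable (ν + 2) (by simp; linarith) q
  unfold bF
  rw [s0.tsum_eq_zero_add, s1.tsum_eq_zero_add, mul_add, ← tsum_mul_left, ← tsum_mul_left,
    add_left_comm, ← Summable.tsum_add]
  · congr 1
    · have h := bGamma_succ ν hν 0
      have h' := bGamma_ne ν hν 0
      have h'' := bGamma_ne (ν+1) (by simp; linarith) 0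
      simp at h h' h'' ⊢
      rw [h] at *
      field_simp at *
      have : ν + 1 ≠ 0 := fun h => by simp [h] at h''
      field_simp
    · apply tsum_congr
      intro k
      have h := bGamma_succ ν hν (k+1)
      have h' := bGamma_ne ν hν (k+1)
      have h'' := bGamma_ne ν hν (k+2)
      have e1 : ν + 2 + (k:ℂ) + 1 = ν + ((k + 1 + 1 : ℕ):ℂ) + 1 := by push_cast; ring
      have e2 : ν + 1 + ((k+1:ℕ):ℂ) + 1 = ν + ((k + 1 + 1 : ℕ):ℂ) + 1 := by push_cast; ring
      rw [e1, e2]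
      have h3 : ν + ((k+1:ℕ):ℂ) + 1 ≠ 0 := by
        intro h4
        rw [h4] at h
        exact h'' (by rw [← zero_mul (Complex.Gamma (ν + ((k+1:ℕ):ℂ) + 1)), ← h4, h4, ← h])
      rw [h, Nat.factorial_succ]
      have : (k : ℂ) + 1 ≠ 0 := by exact_mod_cast Nat.succ_ne_zero k
      have : (Nat.factorial k : ℂ) ≠ 0 := by exact_mod_cast Nat.factorial_ne_zero k
      push_cast at *
      field_simp
      ring
  · exact s2.mul_left _
  · exact ((summable_nat_add_iff 1).2 s1).mul_left _

lemma bF_zero (ν : ℂ) : bF ν 0 = (Complex.Gamma (ν + 1))⁻¹ := by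
  unfold bF
  rw [tsum_eq_single 0]
  · simp
  · intro k hk
    simp [hk]

lemma bF_cont (ν : ℂ) (hν : 0 ≤ ν.re) : Continuous (bF ν) :=
  continuous_iff_continuousAt.2 fun q => (bF_hasDerivAt ν hν q).continuousAt

/-- Wronskian -/
lemma bF_wronsk (ν : ℂ) (hν : ν.re = 0) (q : ℂ) :
    2 * q * bF (ν + 1) q * bF (-ν) q - 2 * q * bF (-ν + 1) q * bF ν q + 2 * ν * bF ν q * bF (-ν) q =
      2 * ν * (Complex.Gamma (ν + 1))⁻¹ * (Complex.Gamma (-ν + 1))⁻¹ := by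
  have hd : ∀ q, HasDerivAt (fun q => 2 * q * bF (ν + 1) q * bF (-ν) q - 2 * q * bF (-ν + 1) q * bF ν q + 2 * ν * bF ν q * bF (-ν) q) 0 q := by
    intro q
    have a0 := bF_hasDerivAt ν (by simp [hν]) q
    have a1 := bF_hasDerivAt (ν+1) (by simp [hν]) q
    have b0 := bF_hasDerivAt (-ν) (by simp [hν]) q
    have b1 := bF_hasDerivAt (-ν+1) (by simp [hν]) q
    have l : HasDerivAt (fun q : ℂ => 2 * q) (2 * 1) q := (hasDerivAt_id q).const_mul 2
    have ra := bF_rec ν (by simp [hν]) q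
    have rb := bF_rec (-ν) (by simp [hν]) q
    rw [show ν + 1 + 1 = ν + 2 by ring] at a1
    rw [show -ν + 1 + 1 = -ν + 2 by ring] at b1
    refine HasDerivAt.congr_deriv ((((l.mul a1).mul b0).sub ((l.mul b1).mul a0)).add ((a0.const_mul (2*ν)).mul b0)) ?_
    simp only [Pi.mul_apply]
    linear_combination (2 * bF (-ν) q) * ra - 2 * bF ν q * rb
  have := is_const_of_deriv_eq_zero (fun q => (hd q).differentiableAt) (fun q => (hd q).deriv) q 0
  simp only [bF_zero] at this
  rw [this]
  ring

noncomputable def bI (ν z : ℂ) : ℂ := Complex.exp (ν * Complex.log (z / 2)) * bF ν (z ^ 2 / 4)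
noncomputable def bV (ν z : ℂ) : ℂ := z ^ 2 / 2 * Complex.exp (ν * Complex.log (z / 2)) * bF (ν + 1) (z ^ 2 / 4)

lemma bI_deriv (ν : ℂ) (hν : 0 ≤ ν.re) (z : ℂ) (hz : 0 < z.re) :
    HasDerivAt (bI ν) ((ν * bI ν z + bV ν z) / z) z := by
  have hz0 : z ≠ 0 := by rintro rfl; simp at hz
  have h1 : HasDerivAt (fun z : ℂ => z / 2) (1 / 2) z := (hasDerivAt_id z).div_const 2
  have h2 := (h1.clog (Or.inl (by simpa using hz))).const_mul ν |>.cexp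
  have h3 : HasDerivAt (fun z : ℂ => z ^ 2 / 4) (2 * z / 4) z := by
    simpa using (hasDerivAt_pow 2 z).div_const 4
  have h4 := (bF_hasDerivAt ν hν (z ^ 2 / 4)).comp z h3
  refine HasDerivAt.congr_deriv (h2.mul h4) ?_
  unfold bI bV
  simp
  field_simp
  ring

lemma bV_deriv (ν : ℂ) (hν : 0 ≤ ν.re) (z : ℂ) (hz : 0 < z.re) :
    HasDerivAt (bV ν) ((-ν * bV ν z + z ^ 2 * bI ν z) / z) z := by
  have hz0 : z ≠ 0 := by rintro rfl; simp at hz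
  have h1 : HasDerivAt (fun z : ℂ => z / 2) (1 / 2) z := (hasDerivAt_id z).div_const 2
  have h2 := (h1.clog (Or.inl (by simpa using hz))).const_mul ν |>.cexp
  have h3 : HasDerivAt (fun z : ℂ => z ^ 2 / 4) (2 * z / 4) z := by
    simpa using (hasDerivAt_pow 2 z).div_const 4
  have h5 : HasDerivAt (fun z : ℂ => z ^ 2 / 2) (2 * z / 2) z := by
    simpa using (hasDerivAt_pow 2 z).div_const 2
  have h4 := (bF_hasDerivAt (ν + 1) (by simp; linarith) (z ^ 2 / 4)).comp z h3
  have r := bF_rec ν hν (z^2/4)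
  rw [show ν + 1 + 1 = ν + 2 by ring] at h4
  refine HasDerivAt.congr_deriv ((h5.mul h2).mul h4) ?_
  unfold bI bV
  simp
  rw [← r]
  field_simp
  ring

lemma b_cosh_ge (t : ℝ) : t ^ 2 / 2 ≤ Real.cosh t := by
  have h : Real.cosh t = 1 + 2 * Real.sinh (t / 2) ^ 2 := by
    have h1 := Real.cosh_two_mul (t / 2)
    have h2 := Real.cosh_sq (t / 2)
    rw [show 2 * (t / 2) = t by ring] at h1
    linarith
  have h2 : (t / 2) ^ 2 ≤ Real.sinh (t / 2) ^ 2 := by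
    rw [sq_le_sq]
    rw [Real.abs_sinh]
    exact Real.self_le_sinh_iff.2 (abs_nonneg _)
  rw [h]
  nlinarith

noncomputable def bE (μ z : ℂ) (t : ℝ) : ℂ := Complex.exp (-z * (Real.cosh t : ℂ) + μ * t)

lemma bE_cont (μ z : ℂ) : Continuous (bE μ z) := by
  unfold bE
  have := Real.continuous_cosh
  fun_prop

lemma bE_norm (μ z : ℂ) (t : ℝ) : ‖bE μ z t‖ = Real.exp (-z.re * Real.cosh t + μ.re * t) := by
  unfold bE
  rw [Complex.norm_exp]
  congr 1
  simp only [Complex.add_re, Complex.mul_re, Complex.neg_re, Complex.ofReal_re, Complex.ofReal_im]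
  ring

lemma bE_real_int (x m : ℝ) (hx : 0 < x) : Integrable (fun t => Real.exp (-x * Real.cosh t + m * t)) := by
  have h := (integrable_cexp_quadratic (b := ((x / 2 : ℝ) : ℂ)) (by simpa using hx) (m : ℂ) 0).norm
  refine h.mono' ?_ ?_
  · have := Real.continuous_cosh
    exact Continuous.aestronglyMeasurable (by fun_prop)
  · filter_upwards with t
    rw [Real.norm_eq_abs, Real.abs_exp, Complex.norm_exp]
    apply Real.exp_le_exp.2
    have : (-((x / 2 : ℝ) : ℂ) * (t : ℂ) ^ 2 + (m : ℂ) * t + 0) = ((-(x / 2) * t ^ 2 + m * t : ℝ) : ℂ) := by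
      push_cast; ring
    rw [this, Complex.ofReal_re]
    nlinarith [b_cosh_ge t]

lemma bE_int (μ z : ℂ) (hz : 0 < z.re) : Integrable (bE μ z) := by
  refine (bE_real_int z.re μ.re hz).mono' (bE_cont μ z).aestronglyMeasurable ?_
  filter_upwards with t
  rw [bE_norm]

noncomputable def bK (μ z : ℂ) : ℂ := ∫ t : ℝ, bE μ z t

lemma bE_shift (μ z : ℂ) (t : ℝ) :
    (Real.cosh t : ℂ) * bE μ z t = (bE (μ + 1) z t + bE (μ - 1) z t) / 2 := by
  unfold bE
  rw [show -z * (Real.cosh t : ℂ) + (μ + 1) * t = (-z * (Real.cosh t : ℂ) + μ * t) + t by ring,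
    show -z * (Real.cosh t : ℂ) + (μ - 1) * t = (-z * (Real.cosh t : ℂ) + μ * t) + (-t) by ring,
    Complex.exp_add _ (t:ℂ), Complex.exp_add _ (-t:ℂ), Complex.ofReal_cosh t, Complex.cosh]
  ring

lemma bE_shift' (μ z : ℂ) (t : ℝ) :
    (Real.sinh t : ℂ) * bE μ z t = (bE (μ + 1) z t - bE (μ - 1) z t) / 2 := by
  unfold bE
  rw [show -z * (Real.cosh t : ℂ) + (μ + 1) * t = (-z * (Real.cosh t : ℂ) + μ * t) + t by ring,
    show -z * (Real.cosh t : ℂ) + (μ - 1) * t = (-z * (Real.cosh t : ℂ) + μ * t) + (-t) by ring,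
    Complex.exp_add _ (t:ℂ), Complex.exp_add _ (-t:ℂ), Complex.ofReal_sinh t, Complex.sinh]
  ring

lemma bK_ibp (μ z : ℂ) (hz : 0 < z.re) : μ * bK μ z = z / 2 * (bK (μ + 1) z - bK (μ - 1) z) := by
  have hd : ∀ t : ℝ, HasDerivAt (bE μ z) (μ * bE μ z t - z / 2 * (bE (μ + 1) z t - bE (μ - 1) z t)) t := by
    intro t
    have h1 : HasDerivAt (fun t : ℝ => (Real.cosh t : ℂ)) (Real.sinh t : ℂ) t :=
      (Real.hasDerivAt_cosh t).ofReal_comp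
    have h2 : HasDerivAt (fun t : ℝ => (t : ℂ)) 1 t := by
      simpa using (hasDerivAt_id t).ofReal_comp
    have h3 := ((h1.const_mul (-z)).add (h2.const_mul μ)).cexp
    refine HasDerivAt.congr_deriv h3 ?_
    have h := bE_shift' μ z t
    have e : z / 2 * (bE (μ + 1) z t - bE (μ - 1) z t) = z * ((Real.sinh t : ℂ) * bE μ z t) := by
      rw [h]; ring
    rw [e]
    unfold bE
    simp only [Pi.add_apply]
    ring
  have i0 := bE_int μ z hz
  have i1 := bE_int (μ + 1) z hz
  have i2 := bE_int (μ - 1) z hz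
  have h := integral_eq_zero_of_hasDerivAt_of_integrable hd
    ((i0.const_mul μ).sub ((i1.sub i2).const_mul (z / 2))) i0
  have i3 : Integrable (fun t => bE (μ + 1) z t - bE (μ - 1) z t) := i1.sub i2
  rw [integral_sub (i0.const_mul μ) (i3.const_mul (z / 2)), integral_const_mul,
    integral_const_mul, integral_sub i1 i2] at h
  unfold bK
  linear_combination h

lemma bK_deriv (μ z : ℂ) (hz : 0 < z.re) :
    HasDerivAt (bK μ) (-(bK (μ + 1) z + bK (μ - 1) z) / 2) z := by
  have hs : {w : ℂ | z.re / 2 < w.re} ∈ 𝓝 z :=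
    (isOpen_lt continuous_const Complex.continuous_re).mem_nhds (by simp; linarith)
  have i1 := bE_int (μ + 1) z hz
  have i2 := bE_int (μ - 1) z hz
  have h := hasDerivAt_integral_of_dominated_loc_of_deriv_le (μ := volume) (𝕜 := ℂ) (F := fun w t => bE μ w t)
    (x₀ := z) (s := {w : ℂ | z.re / 2 < w.re}) (F' := fun w t => -((Real.cosh t : ℂ) * bE μ w t))
    (bound := fun t => (‖bE (μ + 1) ((z.re / 2 : ℝ) : ℂ) t‖ + ‖bE (μ - 1) ((z.re / 2 : ℝ) : ℂ) t‖) / 2)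
    hs (Eventually.of_forall fun w => (bE_cont μ w).aestronglyMeasurable) (bE_int μ z hz)
    ?_ ?_ ?_ ?_
  · refine HasDerivAt.congr_deriv h.2 ?_
    simp only [bE_shift]
    rw [integral_neg, integral_div, integral_add i1 i2]
    unfold bK
    ring
  · have := bE_cont μ z
    have := Real.continuous_cosh
    exact Continuous.aestronglyMeasurable (by fun_prop)
  · filter_upwards with t w hw
    have hw : z.re / 2 < w.re := hw
    have h1 : ‖-((Real.cosh t : ℂ) * bE μ w t)‖ ≤ ‖(Real.cosh t : ℂ) * bE μ ((z.re / 2 : ℝ) : ℂ) t‖ := by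
      rw [norm_neg, norm_mul, norm_mul, bE_norm, bE_norm]
      refine mul_le_mul_of_nonneg_left (Real.exp_le_exp.2 ?_) (norm_nonneg _)
      rw [Complex.ofReal_re]
      nlinarith [Real.cosh_pos t]
    refine h1.trans ?_
    rw [bE_shift, norm_div]
    simp only [Complex.norm_ofNat]
    gcongr
    exact norm_add_le _ _
  · exact ((bE_int _ _ (by simpa using hz)).norm.add (bE_int _ _ (by simpa using hz)).norm).div_const 2
  · filter_upwards with t w hw
    have h1 : HasDerivAt (fun w : ℂ => -w * (Real.cosh t : ℂ) + μ * t) (-1 * (Real.cosh t : ℂ)) w :=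
      ((hasDerivAt_id w).neg.mul_const _).add_const _
    refine HasDerivAt.congr_deriv h1.cexp ?_
    unfold bE
    ring

lemma bK_neg (μ z : ℂ) : bK (-μ) z = bK μ z := by
  unfold bK
  rw [← integral_neg_eq_self]
  congr 1
  ext t
  unfold bE
  simp

lemma b_W_deriv (ν : ℂ) (hν : 0 ≤ ν.re) (z : ℂ) (hz : 0 < z.re) :
    HasDerivAt (fun z => bK ν z * bV ν z + z * bK (ν + 1) z * bI ν z) 0 z := by
  have hz0 : z ≠ 0 := by rintro rfl; simp at hz
  have h1 := bK_deriv ν z hz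
  have h2 := bK_deriv (ν + 1) z hz
  have h3 := bI_deriv ν hν z hz
  have h4 := bV_deriv ν hν z hz
  have e1 := bK_ibp ν z hz
  have e2 := bK_ibp (ν + 1) z hz
  rw [show ν + 1 + 1 = ν + 2 by ring, show ν + 1 - 1 = ν by ring] at h2 e2
  refine HasDerivAt.congr_deriv ((h1.mul h4).add (((hasDerivAt_id z).mul h2).mul h3)) ?_
  simp only [Pi.mul_apply, id]
  field_simp
  linear_combination (-2 * bV ν z) * e1 + (2 * bI ν z * z) * e2

lemma b_W_const (ν : ℂ) (hν : 0 ≤ ν.re) (z w : ℂ) (hz : 0 < z.re) (hw : 0 < w.re) :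
    bK ν z * bV ν z + z * bK (ν + 1) z * bI ν z = bK ν w * bV ν w + w * bK (ν + 1) w * bI ν w := by
  refine IsOpen.is_const_of_deriv_eq_zero (𝕜 := ℂ) (s := {w : ℂ | 0 < w.re})
    (f := fun z => bK ν z * bV ν z + z * bK (ν + 1) z * bI ν z)
    (isOpen_lt continuous_const Complex.continuous_re) ?_ ?_ ?_ hz hw
  · exact (convex_halfSpace_re_gt 0).isPreconnected
  · intro z hz
    exact (b_W_deriv ν hν z hz).differentiableAt.differentiableWithinAt
  · intro z hz
    exact (b_W_deriv ν hν z hz).deriv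

lemma b_gamma_int (s : ℂ) (hs : 0 < s.re) :
    ∫ τ : ℝ, Complex.exp (s * τ - (Real.exp τ : ℂ)) = Complex.Gamma s := by
  rw [Complex.Gamma_eq_integral hs, Complex.GammaIntegral]
  have h := integral_image_eq_integral_abs_deriv_smul (s := Set.univ) (f := Real.exp) (f' := Real.exp)
    MeasurableSet.univ (fun x _ => (Real.hasDerivAt_exp x).hasDerivWithinAt) (Real.exp_injective.injOn)
    (fun x : ℝ => ((Real.exp (-x) : ℝ) : ℂ) * (x : ℂ) ^ (s - 1))
  rw [Set.image_univ, Real.range_exp, setIntegral_univ] at h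
  rw [h]
  congr 1
  ext τ
  have : ((Real.exp τ : ℝ) : ℂ) ^ (s - 1) = Complex.exp ((s - 1) * τ) := by
    rw [Complex.cpow_def_of_ne_zero (by exact_mod_cast (Real.exp_pos τ).ne'), ← Complex.ofReal_log (Real.exp_pos τ).le,
      Real.log_exp, mul_comm]
  rw [this, abs_of_pos (Real.exp_pos τ), Complex.real_smul, Complex.ofReal_exp (-Real.exp τ), ← Complex.exp_add, Complex.ofReal_exp τ, ← Complex.exp_add]
  congr 1
  push_cast
  ring

lemma b_gamma_integrable : Integrable (fun τ : ℝ => Real.exp τ * Real.exp (-Real.exp τ)) := by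
  have h := integrableOn_image_iff_integrableOn_abs_deriv_smul (s := Set.univ) (f := Real.exp) (f' := Real.exp)
    MeasurableSet.univ (fun x _ => (Real.hasDerivAt_exp x).hasDerivWithinAt) (Real.exp_injective.injOn)
    (fun x : ℝ => Real.exp (-x))
  rw [Set.image_univ, Real.range_exp, integrableOn_univ] at h
  have h2 := h.1 (integrableOn_exp_neg_Ioi 0)
  refine h2.congr (ae_of_all _ fun τ => ?_)
  simp

lemma b_zK (ν : ℂ) (θ : ℝ) : ((2 * Real.exp θ : ℝ) : ℂ) * bK (ν + 1) ((2 * Real.exp θ : ℝ) : ℂ) * Complex.exp (ν * θ)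
    = 2 * ∫ τ : ℝ, Complex.exp ((ν + 1) * τ - (Real.exp τ : ℂ) - (Real.exp (2 * θ - τ) : ℂ)) := by
  unfold bK
  rw [← integral_add_right_eq_self (fun τ : ℝ => Complex.exp ((ν + 1) * τ - (Real.exp τ : ℂ) - (Real.exp (2 * θ - τ) : ℂ))) θ,
    ← integral_const_mul, ← integral_const_mul, ← integral_mul_const]
  congr 1
  ext t
  unfold bE
  have e : (((2 * Real.exp θ : ℝ) : ℂ)) = 2 * Complex.exp θ := by push_cast; rfl
  have e2 : ((Real.cosh t : ℝ) : ℂ) = (Complex.exp t + Complex.exp (-t)) / 2 := by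
    rw [Complex.ofReal_cosh, Complex.cosh]
  rw [e, e2, mul_assoc, mul_assoc, ← Complex.exp_add, ← Complex.exp_add]
  congr 2
  push_cast
  rw [show (2 : ℂ) * θ - (t + θ) = θ + - t by ring, Complex.exp_add, Complex.exp_add]
  ring

lemma b_zK_lim (ν : ℂ) (hν : ν.re = 0) :
    Tendsto (fun θ : ℝ => ((2 * Real.exp θ : ℝ) : ℂ) * bK (ν + 1) ((2 * Real.exp θ : ℝ) : ℂ) * Complex.exp (ν * θ))
      atBot (𝓝 (2 * Complex.Gamma (ν + 1))) := by
  simp only [b_zK]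
  rw [← b_gamma_int (ν + 1) (by simp [hν])]
  refine Tendsto.const_mul 2 (tendsto_integral_filter_of_dominated_convergence
    (fun τ : ℝ => Real.exp τ * Real.exp (-Real.exp τ)) ?_ ?_ b_gamma_integrable ?_)
  · filter_upwards with θ
    exact Continuous.aestronglyMeasurable (by fun_prop)
  · filter_upwards with θ
    filter_upwards with τ
    rw [Complex.norm_exp, ← Real.exp_add]
    apply Real.exp_le_exp.2
    simp [hν]
    rw [← Complex.ofReal_ofNat, ← Complex.ofReal_mul, ← Complex.ofReal_sub, Complex.exp_ofReal_re, Complex.exp_ofReal_re]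
    have := Real.exp_pos (2 * θ - τ)
    linarith
  · filter_upwards with τ
    have h : Tendsto (fun θ : ℝ => Real.exp (2 * θ - τ)) atBot (𝓝 0) := by
      refine Real.tendsto_exp_atBot.comp ?_
      exact tendsto_atBot_add_const_right _ _ (tendsto_id.const_mul_atBot (by norm_num))
    have h2 := (Complex.continuous_ofReal.tendsto 0).comp h
    have h3 := (tendsto_const_nhds (x := (ν + 1) * τ - (Real.exp τ : ℂ)) (f := atBot)).sub h2
    have h4 := (Complex.continuous_exp.tendsto _).comp h3
    simpa using! h4

lemma b_log_half (θ : ℝ) : Complex.log (((2 * Real.exp θ : ℝ) : ℂ) / 2) = θ := by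
  have : ((2 * Real.exp θ : ℝ) : ℂ) / 2 = ((Real.exp θ : ℝ) : ℂ) := by push_cast; ring
  rw [this, ← Complex.ofReal_log (Real.exp_pos θ).le, Real.log_exp]

lemma b_z_lim : Tendsto (fun θ : ℝ => ((2 * Real.exp θ : ℝ) : ℂ)) atBot (𝓝 0) := by
  have := (Complex.continuous_ofReal.tendsto _).comp (Real.tendsto_exp_atBot.const_mul 2)
  rw [mul_zero, Complex.ofReal_zero] at this
  exact this

lemma b_F_lim (ν : ℂ) (hν : 0 ≤ ν.re) : Tendsto (fun θ : ℝ => bF ν (((2 * Real.exp θ : ℝ) : ℂ) ^ 2 / 4)) atBot (𝓝 (Complex.Gamma (ν + 1))⁻¹) := by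
  rw [← bF_zero]
  have h1 : Tendsto (fun θ : ℝ => ((2 * Real.exp θ : ℝ) : ℂ) ^ 2 / 4) atBot (𝓝 0) := by
    have := (b_z_lim.pow 2).div_const 4
    simpa using this
  exact ((bF_cont ν hν).tendsto 0).comp h1

lemma b_W_val (ν : ℂ) (hν : ν.re = 0) (hν0 : ν ≠ 0) (z : ℂ) (hz : 0 < z.re) :
    bK ν z * bV ν z + z * bK (ν + 1) z * bI ν z = 2 := by
  have hc : ∀ θ : ℝ, bK ν z * bV ν z + z * bK (ν + 1) z * bI ν z =
      (1 / (4 * ν)) * (((2 * Real.exp θ : ℝ) : ℂ) ^ 2 * bF (ν + 1) (((2 * Real.exp θ : ℝ) : ℂ) ^ 2 / 4) *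
          (((2 * Real.exp θ : ℝ) : ℂ) * bK (ν + 1) ((2 * Real.exp θ : ℝ) : ℂ) * Complex.exp (ν * θ)))
      - (1 / (4 * ν)) * ((((2 * Real.exp θ : ℝ) : ℂ) ^ 2 * Complex.exp (2 * ν * θ)) * bF (ν + 1) (((2 * Real.exp θ : ℝ) : ℂ) ^ 2 / 4) *
          (((2 * Real.exp θ : ℝ) : ℂ) * bK (-ν + 1) ((2 * Real.exp θ : ℝ) : ℂ) * Complex.exp (-ν * θ)))
      + (((2 * Real.exp θ : ℝ) : ℂ) * bK (ν + 1) ((2 * Real.exp θ : ℝ) : ℂ) * Complex.exp (ν * θ)) * bF ν (((2 * Real.exp θ : ℝ) : ℂ) ^ 2 / 4) := by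
    intro θ
    have hp : 0 < (((2 * Real.exp θ : ℝ) : ℂ)).re := by
      rw [Complex.ofReal_re]; positivity
    rw [b_W_const ν hν.ge z ((2 * Real.exp θ : ℝ) : ℂ) hz hp]
    have hi := bK_ibp ν ((2 * Real.exp θ : ℝ) : ℂ) hp
    have hn : bK (ν - 1) ((2 * Real.exp θ : ℝ) : ℂ) = bK (-ν + 1) ((2 * Real.exp θ : ℝ) : ℂ) := by
      rw [← bK_neg]; congr 1; ring
    rw [hn] at hi
    unfold bV bI
    rw [b_log_half]
    generalize ((2 * Real.exp θ : ℝ) : ℂ) = y at *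
    have e1 : Complex.exp (2 * ν * θ) = Complex.exp (ν * θ) * Complex.exp (ν * θ) := by
      rw [← Complex.exp_add]; ring_nf
    have e2 : Complex.exp (ν * θ) * Complex.exp (-ν * θ) = 1 := by
      rw [← Complex.exp_add]; ring_nf; simp
    rw [e1]
    generalize Complex.exp (ν * θ) = A at *
    generalize Complex.exp (-ν * θ) = B at *
    have hv : (1 / (4 * ν)) * ν = 1 / 4 := by field_simp
    generalize (1 / (4 * ν)) = c at *
    linear_combination (-(2 * y ^ 2 * A * bF (ν + 1) (y ^ 2 / 4) * bK ν y)) * hv + (2 * c * y ^ 2 * A * bF (ν + 1) (y ^ 2 / 4)) * hi + (c * y ^ 3 * A * bF (ν + 1) (y ^ 2 / 4) * bK (-ν + 1) y) * e2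
  have l1 := b_zK_lim ν hν
  have l2 := b_zK_lim (-ν) (by simp [hν])
  have f0 := b_F_lim ν hν.ge
  have f1 := b_F_lim (ν + 1) (by simp [hν])
  have z2 := b_z_lim.pow 2
  have z3 : Tendsto (fun θ : ℝ => ((2 * Real.exp θ : ℝ) : ℂ) ^ 2 * Complex.exp (2 * ν * θ)) atBot (𝓝 0) := by
    rw [tendsto_zero_iff_norm_tendsto_zero]
    have := z2.norm
    simp only [ne_eq, OfNat.ofNat_ne_zero, not_false_eq_true, zero_pow, norm_zero] at this
    refine this.congr fun θ => ?_
    rw [norm_mul, Complex.norm_exp]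
    simp [hν]
  have hl := ((((z2.mul f1).mul l1).const_mul (1 / (4 * ν))).sub (((z3.mul f1).mul l2).const_mul (1 / (4 * ν)))).add (l1.mul f0)
  have hg : Complex.Gamma (ν + 1) ≠ 0 := Complex.Gamma_ne_zero_of_re_pos (by simp [hν])
  have hl2 := tendsto_nhds_unique (hl.congr fun θ => (hc θ).symm) tendsto_const_nhds
  rw [← hl2]
  simp
  field_simp

lemma b_connect (ν : ℂ) (hν : ν.re = 0) (hν0 : ν ≠ 0) (z : ℂ) (hz : 0 < z.re) :
    bK ν z = Complex.Gamma (ν) * Complex.Gamma (1 - ν) * (bI (-ν) z - bI ν z) := by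
  have w1 := b_W_val ν hν hν0 z hz
  have w2 := b_W_val (-ν) (by simp [hν]) (by simpa using hν0) z hz
  have w3 := bF_wronsk ν hν (z ^ 2 / 4)
  have hi := bK_ibp ν z hz
  have hn : bK (ν - 1) z = bK (-ν + 1) z := by
    rw [← bK_neg]; congr 1; ring
  rw [hn] at hi
  rw [bK_neg] at w2
  have g1 := Complex.Gamma_add_one ν hν0
  have hg : Complex.Gamma (ν + 1) ≠ 0 := Complex.Gamma_ne_zero_of_re_pos (by simp [hν])
  have hg2 : Complex.Gamma (1 - ν) ≠ 0 := Complex.Gamma_ne_zero_of_re_pos (by simp [hν])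
  rw [g1] at w3 hg
  rw [show -ν + 1 = 1 - ν by ring] at w2 w3 hi
  have hg3 : Complex.Gamma ν ≠ 0 := fun h => by simp [h] at hg
  have e : Complex.exp (ν * Complex.log (z / 2)) * Complex.exp (-ν * Complex.log (z / 2)) = 1 := by
    rw [← Complex.exp_add]; ring_nf; simp
  have w4 : bV ν z * bI (-ν) z - bV (-ν) z * bI ν z + 2 * ν * bI ν z * bI (-ν) z =
      2 * ν * (ν * Complex.Gamma ν)⁻¹ * (Complex.Gamma (1 - ν))⁻¹ := by
    rw [← w3]
    unfold bV bI
    rw [show -ν + 1 = 1 - ν by ring]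
    linear_combination (z ^ 2 / 2 * bF (ν + 1) (z ^ 2 / 4) * bF (-ν) (z ^ 2 / 4) - z ^ 2 / 2 * bF (1 - ν) (z ^ 2 / 4) * bF (ν) (z ^ 2 / 4) + 2 * ν * bF ν (z ^ 2 / 4) * bF (-ν) (z ^ 2 / 4)) * e
  have w5 : bK ν z * (2 * ν * (ν * Complex.Gamma ν)⁻¹ * (Complex.Gamma (1 - ν))⁻¹) = 2 * (bI (-ν) z - bI ν z) := by
    rw [← w4]
    linear_combination bI (-ν) z * w1 - bI ν z * w2 + 2 * bI ν z * bI (-ν) z * hi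
  field_simp at w5
  linear_combination w5

lemma b_sech_int : Integrable (fun u : ℝ => (Real.cosh u)⁻¹) := by
  refine (integrable_inv_one_add_sq.const_mul 4).mono' ?_ ?_
  · have := Real.continuous_cosh
    exact Continuous.aestronglyMeasurable (this.inv₀ fun x => (Real.cosh_pos x).ne')
  · filter_upwards with u
    have h1 := b_cosh_ge u
    have h2 := Real.one_le_cosh u
    rw [norm_inv, Real.norm_eq_abs, abs_of_pos (Real.cosh_pos u), inv_le_comm₀ (Real.cosh_pos u) (by positivity)]
    rw [mul_inv, inv_inv]
    nlinarith

lemma b_sech (ν : ℂ) (hν : ν.re = 0) :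
    ∫ u : ℝ, Complex.exp (2 * ν * u) / (Real.cosh u : ℂ) = Real.pi / Complex.cos (Real.pi * ν) := by
  have hb := Complex.Gamma_mul_Gamma_eq_betaIntegral (s := 1 / 2 + ν) (t := 1 / 2 - ν) (by simp [hν]) (by simp [hν])
  have hg := Complex.Gamma_mul_Gamma_one_sub (1 / 2 + ν)
  rw [show 1 - (1 / 2 + ν) = 1 / 2 - ν by ring, hb, show 1 / 2 + ν + (1 / 2 - ν) = 1 by ring, Complex.Gamma_one, one_mul,
    show (Real.pi : ℂ) * (1 / 2 + ν) = Real.pi * ν + Real.pi / 2 by ring, Complex.sin_add_pi_div_two] at hg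
  rw [← hg, Complex.betaIntegral, intervalIntegral.integral_of_le zero_le_one, integral_Ioc_eq_integral_Ioo]
  have hpos : ∀ u : ℝ, 0 < 1 + Real.exp (-2 * u) := fun u => by positivity
  have himg : (fun u : ℝ => (1 + Real.exp (-2 * u))⁻¹) '' Set.univ = Set.Ioo 0 1 := by
    ext x
    simp only [Set.image_univ, Set.mem_range, Set.mem_Ioo]
    constructor
    · rintro ⟨u, rfl⟩
      refine ⟨by have := hpos u; positivity, inv_lt_one_of_one_lt₀ ?_⟩
      have := Real.exp_pos (-2 * u)
      linarith
    · rintro ⟨h0, h1⟩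
      refine ⟨-(1 / 2) * Real.log ((1 - x) / x), ?_⟩
      rw [show -2 * (-(1 / 2) * Real.log ((1 - x) / x)) = Real.log ((1 - x) / x) by ring,
        Real.exp_log (div_pos (by linarith) h0)]
      field_simp
      ring
  have hinj : Set.InjOn (fun u : ℝ => (1 + Real.exp (-2 * u))⁻¹) Set.univ := by
    intro u _ v _ h
    have h1 : Real.exp (-2 * u) = Real.exp (-2 * v) := by
      have := inv_injective h
      linarith
    have := Real.exp_injective h1
    linarith
  have hder : ∀ u ∈ Set.univ, HasDerivWithinAt (fun u : ℝ => (1 + Real.exp (-2 * u))⁻¹)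
      (2 * Real.exp (-2 * u) / (1 + Real.exp (-2 * u)) ^ 2) Set.univ u := by
    intro u _
    have h1 : HasDerivAt (fun u : ℝ => -2 * u) (-2 * 1) u := (hasDerivAt_id u).const_mul (-2)
    have h2 := (h1.exp.const_add 1).inv (hpos u).ne'
    refine (h2.congr_deriv ?_).hasDerivWithinAt
    ring
  rw [← himg, integral_image_eq_integral_abs_deriv_smul MeasurableSet.univ hder hinj, setIntegral_univ]
  congr 1
  ext u
  have hp := hpos u
  set l := Real.log (1 + Real.exp (-2 * u)) with hl
  have hel : 1 + Real.exp (-2 * u) = Real.exp l := by rw [hl, Real.exp_log hp]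
  have c1 : ((((1 + Real.exp (-2 * u))⁻¹ : ℝ)) : ℂ) = Complex.exp ((-l : ℝ) : ℂ) := by
    rw [hel, ← Real.exp_neg, Complex.ofReal_exp]
  have c2 : 1 - ((((1 + Real.exp (-2 * u))⁻¹ : ℝ)) : ℂ) = Complex.exp ((-2 * u - l : ℝ) : ℂ) := by
    rw [← Complex.ofReal_exp, Real.exp_sub, ← hel, ← Complex.ofReal_one, ← Complex.ofReal_sub]
    congr 1
    field_simp
    ring
  have cp : ∀ (r : ℝ) (w : ℂ), Complex.exp (r : ℂ) ^ w = Complex.exp (w * r) := by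
    intro r w
    rw [← Complex.ofReal_exp, Complex.cpow_def_of_ne_zero (by exact_mod_cast (Real.exp_pos r).ne'),
      ← Complex.ofReal_log (Real.exp_pos r).le, Real.log_exp, mul_comm]
  have c3 : |2 * Real.exp (-2 * u) / (1 + Real.exp (-2 * u)) ^ 2| = 2 * Real.exp (-2 * u - 2 * l) := by
    rw [abs_of_pos (by positivity), hel, Real.exp_sub, ← Real.exp_nat_mul]
    push_cast
    ring
  have c4 : Real.cosh u = Real.exp (u + l) / 2 := by
    rw [Real.exp_add, ← hel, Real.cosh_eq, mul_add, ← Real.exp_add]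
    ring_nf
  rw [c3, c2, c1, cp, cp, Complex.real_smul, c4]
  push_cast
  rw [← Complex.exp_add, mul_assoc (2:ℂ) (Complex.exp _), ← Complex.exp_add, div_div_eq_mul_div, mul_comm (Complex.exp _) (2:ℂ), mul_div_assoc, ← Complex.exp_sub]
  congr 2
  ring

lemma b_RL (g : ℝ → ℂ) :
    Tendsto (fun l : ℝ => ∫ u in Set.Ioi (0:ℝ), Complex.exp (Complex.I * l * (Real.cosh u : ℂ)) * g u) atTop (𝓝 0) := by
  have hm : MeasurableSet (Real.cosh '' Set.Ioi 0) := by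
    have : Real.cosh '' Set.Ioi 0 = Set.Ioi 1 := by
      ext x
      constructor
      · rintro ⟨u, hu, rfl⟩
        exact Real.one_lt_cosh.2 (ne_of_gt hu)
      · intro hx
        exact ⟨Real.arcosh x, Real.arcosh_pos hx, Real.cosh_arcosh (le_of_lt hx)⟩
    rw [this]
    exact measurableSet_Ioi
  have h := Real.tendsto_integral_exp_smul_cocompact
    ((Real.cosh '' Set.Ioi 0).indicator (fun p => g (Real.arcosh p) / (Real.sinh (Real.arcosh p) : ℂ)))
  have hw : Tendsto (fun l : ℝ => -l / (2 * Real.pi)) atTop (cocompact ℝ) := by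
    refine Tendsto.mono_right ?_ atBot_le_cocompact
    have : Tendsto (fun l : ℝ => -l) atTop atBot := tendsto_neg_atTop_atBot
    exact this.atBot_div_const (by positivity)
  refine (h.comp hw).congr fun l => ?_
  simp only [Function.comp]
  have e : ∀ v : ℝ, (Real.fourierChar (-(v * (-l / (2 * Real.pi)))) • (Real.cosh '' Set.Ioi 0).indicator (fun p => g (Real.arcosh p) / (Real.sinh (Real.arcosh p) : ℂ)) v)
      = (Real.cosh '' Set.Ioi 0).indicator (fun v => Complex.exp (Complex.I * l * v) * (g (Real.arcosh v) / (Real.sinh (Real.arcosh v) : ℂ))) v := by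
    intro v
    by_cases hv : v ∈ Real.cosh '' Set.Ioi 0
    · rw [Set.indicator_of_mem hv, Set.indicator_of_mem hv, Circle.smul_def, Real.fourierChar_apply, smul_eq_mul]
      congr 2
      push_cast
      have : (Real.pi : ℂ) ≠ 0 := by exact_mod_cast Real.pi_ne_zero
      field_simp
    · rw [Set.indicator_of_notMem hv, Set.indicator_of_notMem hv, smul_zero]
  simp_rw [e]
  rw [integral_indicator hm, integral_image_eq_integral_abs_deriv_smul measurableSet_Ioi
    (fun x _ => (Real.hasDerivAt_cosh x).hasDerivWithinAt)]
  · refine setIntegral_congr_fun measurableSet_Ioi fun u hu => ?_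
    have hs : 0 < Real.sinh u := Real.sinh_pos_iff.2 hu
    have hs' : (Real.sinh u : ℂ) ≠ 0 := by exact_mod_cast hs.ne'
    rw [Real.arcosh_cosh (le_of_lt hu), abs_of_pos hs, Complex.real_smul]
    field_simp
  · intro u hu v hv h
    have := congrArg Real.arcosh h
    rwa [Real.arcosh_cosh (le_of_lt hu), Real.arcosh_cosh (le_of_lt hv)] at this

lemma b_osc_int (ν : ℂ) (hν : ν.re = 0) (w : ℂ) (hw : 0 ≤ w.re) :
    Integrable (fun u : ℝ => Complex.exp (-w * (Real.cosh u : ℂ)) * (Complex.exp (2 * ν * u) / (Real.cosh u : ℂ))) := by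
  have hc := Real.continuous_cosh
  refine b_sech_int.mono' (Continuous.aestronglyMeasurable ?_) ?_
  · have : ∀ u : ℝ, (Real.cosh u : ℂ) ≠ 0 := fun u => by exact_mod_cast (Real.cosh_pos u).ne'
    fun_prop (disch := assumption)
  · filter_upwards with u
    rw [norm_mul, norm_div, Complex.norm_exp, Complex.norm_exp, Complex.norm_real, Real.norm_eq_abs, abs_of_pos (Real.cosh_pos u)]
    have h1 : (-w * (Real.cosh u : ℂ)).re = -w.re * Real.cosh u := by
      simp only [Complex.mul_re, Complex.neg_re, Complex.ofReal_re, Complex.ofReal_im]; ring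
    have h2 : (2 * ν * u).re = 0 := by simp [hν]
    rw [h1, h2, Real.exp_zero, one_div]
    have : Real.exp (-w.re * Real.cosh u) ≤ 1 := Real.exp_le_one_iff.2 (by nlinarith [Real.cosh_pos u])
    have h3 : 0 < (Real.cosh u)⁻¹ := inv_pos.2 (Real.cosh_pos u)
    nlinarith

lemma b_RL2 (ν : ℂ) (hν : ν.re = 0) :
    Tendsto (fun l : ℝ => ∫ u : ℝ, Complex.exp (-(-Complex.I * l) * (Real.cosh u : ℂ)) * (Complex.exp (2 * ν * u) / (Real.cosh u : ℂ))) atTop (𝓝 0) := by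
  have h1 := (b_RL (fun u => Complex.exp (2 * ν * u) / (Real.cosh u : ℂ))).add (b_RL (fun u => Complex.exp (2 * (-ν) * u) / (Real.cosh u : ℂ)))
  rw [add_zero] at h1
  refine h1.congr fun l => ?_
  have hi := b_osc_int ν hν (-Complex.I * l) (by simp)
  rw [← intervalIntegral.integral_Iic_add_Ioi (b := 0) hi.integrableOn hi.integrableOn, add_comm]
  congr 1
  · have := integral_comp_neg_Ioi (0:ℝ) (fun u : ℝ => Complex.exp (-(-Complex.I * l) * (Real.cosh u : ℂ)) * (Complex.exp (2 * ν * u) / (Real.cosh u : ℂ)))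
    rw [neg_zero] at this
    rw [← this]
    simp
  · simp

noncomputable def bG (ν z : ℂ) (p : ℝ × ℝ) : ℂ :=
  Complex.exp (-(2 * z * (Real.cosh p.2 : ℂ)) * (Real.cosh p.1 : ℂ)) *
    (Complex.exp (2 * ν * p.1) / (Real.cosh p.1 : ℂ)) * (Real.cosh p.2 : ℂ)⁻¹

noncomputable def bP (ν z : ℂ) : ℂ := ∫ p : ℝ × ℝ, bG ν z p

lemma b_cosh_ne (u : ℝ) : (Real.cosh u : ℂ) ≠ 0 := by exact_mod_cast (Real.cosh_pos u).ne'

lemma bG_cont (ν z : ℂ) : Continuous (bG ν z) := by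
  unfold bG
  have hc := Real.continuous_cosh
  have h1 : ∀ p : ℝ × ℝ, (Real.cosh p.1 : ℂ) ≠ 0 := fun p => b_cosh_ne _
  have h2 : ∀ p : ℝ × ℝ, (Real.cosh p.2 : ℂ) ≠ 0 := fun p => b_cosh_ne _
  fun_prop (disch := assumption)

lemma bG_norm (ν z : ℂ) (hν : ν.re = 0) (p : ℝ × ℝ) :
    ‖bG ν z p‖ = Real.exp (-2 * z.re * (Real.cosh p.1 * Real.cosh p.2)) * ((Real.cosh p.1)⁻¹ * (Real.cosh p.2)⁻¹) := by
  unfold bG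
  rw [norm_mul, norm_mul, norm_div, norm_inv, Complex.norm_exp, Complex.norm_exp, Complex.norm_real, Complex.norm_real,
    Real.norm_eq_abs, Real.norm_eq_abs, abs_of_pos (Real.cosh_pos p.1), abs_of_pos (Real.cosh_pos p.2)]
  have h2 : (2 * ν * p.1).re = 0 := by simp [hν]
  have h1 : (-(2 * z * (Real.cosh p.2 : ℂ)) * (Real.cosh p.1 : ℂ)).re = -2 * z.re * (Real.cosh p.1 * Real.cosh p.2) := by
    simp only [Complex.mul_re, Complex.mul_im, Complex.neg_re, Complex.ofReal_re, Complex.ofReal_im, Complex.re_ofNat, Complex.im_ofNat]; ring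
  rw [h1, h2, Real.exp_zero]
  ring

lemma bG_norm_le (ν z : ℂ) (hν : ν.re = 0) (hz : 0 ≤ z.re) (p : ℝ × ℝ) :
    ‖bG ν z p‖ ≤ (Real.cosh p.1)⁻¹ * (Real.cosh p.2)⁻¹ := by
  rw [bG_norm ν z hν]
  have h1 := Real.cosh_pos p.1
  have h2 := Real.cosh_pos p.2
  have h3 : 0 < (Real.cosh p.1)⁻¹ * (Real.cosh p.2)⁻¹ := by positivity
  have : Real.exp (-2 * z.re * (Real.cosh p.1 * Real.cosh p.2)) ≤ 1 := by
    apply Real.exp_le_one_iff.2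
    have : 0 ≤ z.re * (Real.cosh p.1 * Real.cosh p.2) := by positivity
    linarith
  nlinarith

lemma b_bound_int : Integrable (fun p : ℝ × ℝ => (Real.cosh p.1)⁻¹ * (Real.cosh p.2)⁻¹) :=
  b_sech_int.mul_prod b_sech_int

lemma bG_int (ν z : ℂ) (hν : ν.re = 0) (hz : 0 ≤ z.re) : Integrable (bG ν z) :=
  b_bound_int.mono' (bG_cont ν z).aestronglyMeasurable (ae_of_all _ (bG_norm_le ν z hν hz))

lemma bP_cont (ν : ℂ) (hν : ν.re = 0) (z : ℂ) : ContinuousWithinAt (bP ν) {w | 0 ≤ w.re} z := by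
  refine continuousWithinAt_of_dominated (bound := fun p : ℝ × ℝ => (Real.cosh p.1)⁻¹ * (Real.cosh p.2)⁻¹)
    ?_ ?_ b_bound_int ?_
  · filter_upwards with w
    exact (bG_cont ν w).aestronglyMeasurable
  · filter_upwards [self_mem_nhdsWithin] with w hw
    exact ae_of_all _ (bG_norm_le ν w hν hw)
  · filter_upwards with p
    unfold bG
    exact Continuous.continuousWithinAt (by fun_prop)

lemma bP_zero (ν : ℂ) (hν : ν.re = 0) : bP ν 0 = Real.pi ^ 2 / Complex.cos (Real.pi * ν) := by
  have h1 := b_sech ν hν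
  have h2 := b_sech 0 (by simp)
  simp at h2
  have h := integral_prod_mul (μ := (volume : Measure ℝ)) (ν := (volume : Measure ℝ))
    (fun u : ℝ => Complex.exp (2 * ν * u) / (Real.cosh u : ℂ)) (fun v : ℝ => (Real.cosh v : ℂ)⁻¹)
  rw [h1] at h
  unfold bP bG
  simp only [mul_zero, zero_mul, neg_zero, Complex.exp_zero, one_mul]
  refine h.trans ?_
  simp only [Complex.ofReal_cosh]
  rw [h2]
  ring

lemma bP_lim (ν : ℂ) (hν : ν.re = 0) : Tendsto (fun T : ℝ => bP ν (-Complex.I * T)) atTop (𝓝 0) := by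
  have e : ∀ T : ℝ, bP ν (-Complex.I * T) = ∫ v : ℝ, (∫ u : ℝ, Complex.exp (-(-Complex.I * ((2 * T * Real.cosh v : ℝ) : ℂ)) * (Real.cosh u : ℂ)) *
      (Complex.exp (2 * ν * u) / (Real.cosh u : ℂ))) * (Real.cosh v : ℂ)⁻¹ := by
    intro T
    unfold bP
    have hi := bG_int ν (-Complex.I * T) hν (by simp)
    rw [Measure.volume_eq_prod] at hi ⊢
    rw [integral_prod_symm _ hi]
    congr 1
    ext v
    rw [← integral_mul_const]
    congr 1
    ext u
    unfold bG
    congr 3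
    push_cast
    ring
  simp_rw [e]
  rw [show (0:ℂ) = ∫ v : ℝ, (0:ℂ) by simp]
  refine tendsto_integral_filter_of_dominated_convergence (fun v => (∫ u : ℝ, (Real.cosh u)⁻¹) * (Real.cosh v)⁻¹) ?_ ?_ (b_sech_int.const_mul _) ?_
  · filter_upwards with T
    have hi := bG_int ν (-Complex.I * T) hν (by simp)
    rw [Measure.volume_eq_prod] at hi
    have := hi.integral_prod_right.aestronglyMeasurable
    refine this.congr (ae_of_all _ fun v => ?_)
    simp only []
    rw [← integral_mul_const]
    congr 1
    ext u
    unfold bG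
    congr 3
    push_cast
    ring
  · filter_upwards with T
    filter_upwards with v
    rw [norm_mul, norm_inv, Complex.norm_real, Real.norm_eq_abs, abs_of_pos (Real.cosh_pos v)]
    refine mul_le_mul_of_nonneg_right ?_ (inv_nonneg.2 (Real.cosh_pos v).le)
    refine norm_integral_le_of_norm_le b_sech_int (ae_of_all _ fun u => ?_)
    rw [norm_mul, norm_div, Complex.norm_exp, Complex.norm_exp, Complex.norm_real, Real.norm_eq_abs, abs_of_pos (Real.cosh_pos u)]
    have h2 : (2 * ν * u).re = 0 := by simp [hν]
    have h1 : (-(-Complex.I * ((2 * T * Real.cosh v : ℝ) : ℂ)) * (Real.cosh u : ℂ)).re = 0 := by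
      simp only [Complex.mul_re, Complex.mul_im, Complex.neg_re, Complex.neg_im, Complex.ofReal_re, Complex.ofReal_im, Complex.I_re, Complex.I_im]; ring
    rw [h1, h2]
    simp
  · filter_upwards with v
    have ht : Tendsto (fun T : ℝ => 2 * T * Real.cosh v) atTop atTop :=
      (tendsto_id.const_mul_atTop (by norm_num)).atTop_mul_const (Real.cosh_pos v)
    have := ((b_RL2 ν hν).comp ht).mul_const ((Real.cosh v : ℂ)⁻¹)
    rw [zero_mul] at this
    exact this

lemma bK_sq (ν z : ℂ) (hν : ν.re = 0) (hz : 0 < z.re) :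
    Integrable (fun p : ℝ × ℝ => bE ν z (p.1 + p.2) * bE ν z (p.1 - p.2)) ∧
    bK ν z ^ 2 = 2 * ∫ p : ℝ × ℝ, bE ν z (p.1 + p.2) * bE ν z (p.1 - p.2) := by
  have hc := bE_cont ν z
  have hi := bE_int ν z hz
  have hint : Integrable (fun p : ℝ × ℝ => bE ν z (p.1 + p.2) * bE ν z (p.1 - p.2)) := by
    have hb := (bE_real_int z.re 0 hz).mul_prod (bE_real_int z.re 0 hz)
    refine hb.mono' (Continuous.aestronglyMeasurable (by fun_prop)) (ae_of_all _ fun p => ?_)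
    rw [norm_mul, bE_norm, bE_norm, ← Real.exp_add, ← Real.exp_add]
    apply Real.exp_le_exp.2
    rw [hν, Real.cosh_add, Real.cosh_sub]
    have h1 := Real.one_le_cosh p.1
    have h2 := Real.one_le_cosh p.2
    have h3 : 0 ≤ z.re * (2 * (Real.cosh p.1 * Real.cosh p.2) - Real.cosh p.1 - Real.cosh p.2) := by
      apply mul_nonneg hz.le
      nlinarith
    nlinarith
  refine ⟨hint, ?_⟩
  have hint2 : Integrable (Function.uncurry fun t u : ℝ => bE ν z t * bE ν z (2 * u - t)) (volume.prod volume) := by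
    rw [integrable_prod_iff (Continuous.aestronglyMeasurable (by unfold Function.uncurry; fun_prop))]
    have hsc : ∀ t : ℝ, Integrable (fun u : ℝ => bE ν z (2 * u - t)) := fun t =>
      (hi.comp_sub_right t).comp_mul_left' two_ne_zero
    constructor
    · filter_upwards with t
      exact (hsc t).const_mul (bE ν z t)
    · have : ∀ t : ℝ, ∫ u : ℝ, ‖Function.uncurry (fun t u : ℝ => bE ν z t * bE ν z (2 * u - t)) (t, u)‖ = ‖bE ν z t‖ * (|(2:ℝ)⁻¹| • ∫ u : ℝ, ‖bE ν z u‖) := by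
        intro t
        simp only [Function.uncurry, norm_mul]
        rw [integral_const_mul, Measure.integral_comp_mul_left (fun u => ‖bE ν z (u - t)‖) 2,
          integral_sub_right_eq_self (fun u => ‖bE ν z u‖)]
      simp_rw [this]
      exact hi.norm.mul_const _
  have e1 : ∀ t : ℝ, bK ν z = 2 * ∫ u : ℝ, bE ν z (2 * u - t) := by
    intro t
    rw [Measure.integral_comp_mul_left (fun u => bE ν z (u - t)) 2, integral_sub_right_eq_self (fun u => bE ν z u),
      abs_of_pos (by norm_num), Complex.real_smul]
    unfold bK
    push_cast
    ring
  have e2 : bK ν z ^ 2 = 2 * ∫ t : ℝ, ∫ u : ℝ, bE ν z t * bE ν z (2 * u - t) := by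
    rw [sq]
    nth_rw 1 [bK]
    rw [← integral_mul_const, ← integral_const_mul]
    congr 1
    ext t
    rw [integral_const_mul, e1 t]
    ring
  rw [e2, integral_integral_swap hint2]
  rw [Measure.volume_eq_prod] at hint ⊢
  rw [integral_prod _ hint]
  congr 2
  ext u
  simp only
  rw [← integral_add_left_eq_self _ u]
  congr 1
  ext v
  ring_nf

lemma bP_deriv (ν z : ℂ) (hν : ν.re = 0) (hz : 0 < z.re) : HasDerivAt (bP ν) (-bK ν z ^ 2) z := by
  have hs : {w : ℂ | z.re / 2 < w.re} ∈ 𝓝 z :=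
    (isOpen_lt continuous_const Complex.continuous_re).mem_nhds (by simp; linarith)
  have hE : ∀ (w : ℂ) (p : ℝ × ℝ), bE ν w (p.1 + p.2) * bE ν w (p.1 - p.2) =
      Complex.exp (-(2 * w * (Real.cosh p.2 : ℂ)) * (Real.cosh p.1 : ℂ)) * Complex.exp (2 * ν * p.1) := by
    intro w p
    unfold bE
    rw [← Complex.exp_add, ← Complex.exp_add, Real.cosh_add, Real.cosh_sub]
    congr 1
    push_cast
    ring
  have h := hasDerivAt_integral_of_dominated_loc_of_deriv_le (μ := (volume : Measure (ℝ × ℝ))) (𝕜 := ℂ) (F := fun w p => bG ν w p)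
    (x₀ := z) (s := {w : ℂ | z.re / 2 < w.re}) (F' := fun w p => -(2 * (bE ν w (p.1 + p.2) * bE ν w (p.1 - p.2))))
    (bound := fun p => 2 * ‖bE ν ((z.re / 2 : ℝ) : ℂ) (p.1 + p.2) * bE ν ((z.re / 2 : ℝ) : ℂ) (p.1 - p.2)‖)
    hs (Eventually.of_forall fun w => (bG_cont ν w).aestronglyMeasurable) (bG_int ν z hν hz.le)
    ?_ ?_ ?_ ?_
  · refine HasDerivAt.congr_deriv h.2 ?_
    rw [integral_neg, integral_const_mul, (bK_sq ν z hν hz).2]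
  · have := bE_cont ν z
    exact Continuous.aestronglyMeasurable (by fun_prop)
  · filter_upwards with p w hw
    have hw : z.re / 2 < w.re := hw
    rw [norm_neg, norm_mul, Complex.norm_ofNat, norm_mul, norm_mul, bE_norm, bE_norm, bE_norm, bE_norm, Complex.ofReal_re]
    have h1 := Real.cosh_pos (p.1 + p.2)
    have h2 := Real.cosh_pos (p.1 - p.2)
    have h3 : Real.exp (-w.re * Real.cosh (p.1 + p.2) + ν.re * (p.1 + p.2)) ≤ Real.exp (-(z.re / 2) * Real.cosh (p.1 + p.2) + ν.re * (p.1 + p.2)) :=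
      Real.exp_le_exp.2 (by nlinarith)
    have h4 : Real.exp (-w.re * Real.cosh (p.1 - p.2) + ν.re * (p.1 - p.2)) ≤ Real.exp (-(z.re / 2) * Real.cosh (p.1 - p.2) + ν.re * (p.1 - p.2)) :=
      Real.exp_le_exp.2 (by nlinarith)
    gcongr
  · exact (bK_sq ν _ hν (by simpa using hz)).1.norm.const_mul 2
  · filter_upwards with p w hw
    have h1 : HasDerivAt (fun w : ℂ => -(2 * w * (Real.cosh p.2 : ℂ)) * (Real.cosh p.1 : ℂ)) (-(2 * 1 * (Real.cosh p.2 : ℂ)) * (Real.cosh p.1 : ℂ)) w :=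
      ((((hasDerivAt_id w).const_mul 2).mul_const _).neg.mul_const _)
    refine HasDerivAt.congr_deriv ((h1.cexp.mul_const _).mul_const _) ?_
    rw [hE]
    have e1 := b_cosh_ne p.1
    have e2 := b_cosh_ne p.2
    generalize Complex.exp (-(2 * w * (Real.cosh p.2 : ℂ)) * (Real.cosh p.1 : ℂ)) = A
    field_simp

lemma bI_bound (ν : ℂ) (hν : ν.re = 0) (R : ℝ) : ∃ B, ∀ z : ℂ, ‖z‖ ≤ R → ‖bI ν z‖ ≤ B := by
  have hc : Continuous (fun z : ℂ => bF ν (z ^ 2 / 4)) := (bF_cont ν hν.ge).comp (by fun_prop)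
  obtain ⟨B, hB⟩ := (isCompact_closedBall (0:ℂ) R).exists_bound_of_continuousOn hc.continuousOn
  refine ⟨Real.exp (|ν.im| * Real.pi) * B, fun z hz => ?_⟩
  unfold bI
  rw [norm_mul]
  have h1 := hB z (by simpa using hz)
  refine mul_le_mul ?_ h1 (norm_nonneg _) (Real.exp_pos _).le
  rw [Complex.norm_exp]
  apply Real.exp_le_exp.2
  rw [Complex.mul_re, hν, Complex.log_im, zero_mul, zero_sub]
  calc -(ν.im * (z / 2).arg) ≤ |ν.im * (z / 2).arg| := neg_le_abs _
    _ = |ν.im| * |(z / 2).arg| := abs_mul _ _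
    _ ≤ _ := by gcongr; exact Complex.abs_arg_le_pi _

lemma bI_contAt (ν : ℂ) (hν : ν.re = 0) (z : ℂ) (hz : z / 2 ∈ Complex.slitPlane) : ContinuousAt (bI ν) z := by
  unfold bI
  have hc : Continuous (fun z : ℂ => bF ν (z ^ 2 / 4)) := (bF_cont ν hν.ge).comp (by fun_prop)
  have h1 : ContinuousAt (fun z : ℂ => z / 2) z := by fun_prop
  exact ((h1.clog hz).const_mul ν).cexp.mul hc.continuousAt

noncomputable def bM (ν z : ℂ) : ℂ := Complex.Gamma (ν) * Complex.Gamma (1 - ν) * (bI (-ν) z - bI ν z)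

lemma bM_contAt (ν : ℂ) (hν : ν.re = 0) (z : ℂ) (hz : z / 2 ∈ Complex.slitPlane) : ContinuousAt (bM ν) z :=
  ((bI_contAt (-ν) (by simp [hν]) z hz).sub (bI_contAt ν hν z hz)).const_mul _

lemma bM_bound (ν : ℂ) (hν : ν.re = 0) (R : ℝ) : ∃ B, ∀ z : ℂ, ‖z‖ ≤ R → ‖bM ν z‖ ≤ B := by
  obtain ⟨B1, h1⟩ := bI_bound ν hν R
  obtain ⟨B2, h2⟩ := bI_bound (-ν) (by simp [hν]) R
  refine ⟨‖Complex.Gamma (ν) * Complex.Gamma (1 - ν)‖ * (B2 + B1), fun z hz => ?_⟩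
  unfold bM
  rw [norm_mul]
  gcongr
  exact (norm_sub_le _ _).trans (add_le_add (h2 z hz) (h1 z hz))

lemma b_slit (x : ℝ) (hx : 0 < x) : (-Complex.I * x) / 2 ∈ Complex.slitPlane := by
  right
  simp
  exact hx.ne'

lemma bM_intervalIntegrable (ν : ℂ) (hν : ν.re = 0) (T : ℝ) (hT : 0 < T) :
    IntervalIntegrable (fun x : ℝ => bM ν (-Complex.I * x) ^ 2) volume 0 T := by
  obtain ⟨B, hB⟩ := bM_bound ν hν T
  rw [intervalIntegrable_iff_integrableOn_Ioc_of_le hT.le]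
  refine IntegrableOn.of_bound (by simp) (ContinuousOn.aestronglyMeasurable ?_ measurableSet_Ioc) (B ^ 2) ?_
  · intro x hx
    have := (bM_contAt ν hν _ (b_slit x hx.1))
    have h2 : ContinuousAt (fun x : ℝ => -Complex.I * (x : ℂ)) x := by fun_prop
    exact ((ContinuousAt.comp (g := bM ν) (f := fun x : ℝ => -Complex.I * (x : ℂ)) this h2).pow 2).continuousWithinAt
  · refine (ae_restrict_iff' measurableSet_Ioc).2 (ae_of_all _ fun x hx => ?_)
    rw [norm_pow]
    gcongr
    apply hB
    simp
    rw [abs_of_pos hx.1]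
    exact hx.2

lemma bM_integral (ν : ℂ) (hν : ν.re = 0) (hν0 : ν ≠ 0) (T : ℝ) (hT : 0 < T) :
    Complex.I * ∫ x in (0:ℝ)..T, bM ν (-Complex.I * x) ^ 2 = bP ν (-Complex.I * T) - bP ν 0 := by
  have h1 : ∀ ε : ℝ, 0 < ε → Complex.I * ∫ x in (0:ℝ)..T, bM ν (ε + -Complex.I * x) ^ 2 =
      bP ν (ε + -Complex.I * T) - bP ν (ε + -Complex.I * (0:ℝ)) := by
    intro ε hε
    have hre : ∀ x : ℝ, 0 < ((ε : ℂ) + -Complex.I * x).re := fun x => by simpa using hε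
    rw [← intervalIntegral.integral_const_mul]
    refine intervalIntegral.integral_eq_sub_of_hasDerivAt (f := fun x : ℝ => bP ν (ε + -Complex.I * x)) ?_ ?_
    · intro x _
      have h2 : HasDerivAt (fun x : ℝ => (ε : ℂ) + -Complex.I * x) (-Complex.I * 1) x :=
        ((by simpa using (hasDerivAt_id x).ofReal_comp : HasDerivAt (fun t : ℝ => (t : ℂ)) 1 x).const_mul _).const_add _
      have h3 := (bP_deriv ν _ hν (hre x)).comp x h2
      refine HasDerivAt.congr_deriv h3 ?_
      rw [b_connect ν hν hν0 _ (hre x)]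
      unfold bM
      ring
    · apply Continuous.intervalIntegrable
      refine continuous_const.mul (Continuous.pow (continuous_iff_continuousAt.2 fun x => ?_) 2)
      have := bM_contAt ν hν ((ε : ℂ) + -Complex.I * x) (Or.inl (by simpa using hε))
      have h2 : ContinuousAt (fun x : ℝ => (ε : ℂ) + -Complex.I * (x : ℂ)) x := by fun_prop
      exact ContinuousAt.comp (g := bM ν) (f := fun x : ℝ => (ε : ℂ) + -Complex.I * (x : ℂ)) this h2
  obtain ⟨B, hB⟩ := bM_bound ν hν (1 + T)
  have hL : Tendsto (fun ε : ℝ => Complex.I * ∫ x in (0:ℝ)..T, bM ν (ε + -Complex.I * x) ^ 2) (𝓝[>] 0)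
      (𝓝 (Complex.I * ∫ x in (0:ℝ)..T, bM ν (-Complex.I * x) ^ 2)) := by
    refine Tendsto.const_mul _ (intervalIntegral.tendsto_integral_filter_of_dominated_convergence (fun _ => B ^ 2) ?_ ?_ (by simp) ?_)
    · filter_upwards [self_mem_nhdsWithin] with ε hε
      refine Continuous.aestronglyMeasurable (Continuous.pow (continuous_iff_continuousAt.2 fun x => ?_) 2)
      have := bM_contAt ν hν ((ε : ℂ) + -Complex.I * x) (Or.inl (by simpa using hε))
      have h2 : ContinuousAt (fun x : ℝ => (ε : ℂ) + -Complex.I * (x : ℂ)) x := by fun_prop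
      exact ContinuousAt.comp (g := bM ν) (f := fun x : ℝ => (ε : ℂ) + -Complex.I * (x : ℂ)) this h2
    · filter_upwards [Ioo_mem_nhdsGT (zero_lt_one (α := ℝ))] with ε hε
      refine ae_of_all _ fun x hx => ?_
      rw [Set.uIoc_of_le hT.le] at hx
      rw [norm_pow]
      gcongr
      apply hB
      refine (norm_add_le _ _).trans ?_
      simp
      rw [abs_of_pos hx.1, abs_of_pos hε.1]
      linarith [hx.2, hε.2]
    · refine ae_of_all _ fun x hx => ?_
      rw [Set.uIoc_of_le hT.le] at hx
      have h := bM_contAt ν hν _ (b_slit x hx.1)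
      have h2 : Tendsto (fun ε : ℝ => (ε : ℂ) + -Complex.I * x) (𝓝[>] 0) (𝓝 (-Complex.I * x)) := by
        have : Continuous (fun ε : ℝ => (ε : ℂ) + -Complex.I * x) := by fun_prop
        have := (this.tendsto 0).mono_left (nhdsWithin_le_nhds (s := Set.Ioi 0))
        simpa using this
      exact (h.tendsto.comp h2).pow 2
  have hP : ∀ y : ℝ, Tendsto (fun ε : ℝ => bP ν (ε + -Complex.I * y)) (𝓝[>] 0) (𝓝 (bP ν (-Complex.I * y))) := by
    intro y
    have h := bP_cont ν hν (-Complex.I * y)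
    refine h.tendsto.comp (tendsto_nhdsWithin_iff.2 ⟨?_, ?_⟩)
    · have : Continuous (fun ε : ℝ => (ε : ℂ) + -Complex.I * y) := by fun_prop
      have := (this.tendsto 0).mono_left (nhdsWithin_le_nhds (s := Set.Ioi 0))
      simpa using this
    · filter_upwards [self_mem_nhdsWithin] with ε hε
      have : 0 < ε := hε
      simpa using this.le
  have hR := (hP T).sub (hP 0)
  have := tendsto_nhds_unique (hL.congr' (by filter_upwards [self_mem_nhdsWithin] with ε hε using h1 ε hε)) hR
  rw [this]
  simp

lemma bI_besselJ (ν : ℂ) (x : ℝ) (hx : 0 < x) :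
    bI ν (-Complex.I * x) = Complex.exp (-(ν * Complex.I * (Real.pi / 2))) * besselJ ν x := by
  have hl : Complex.log (-Complex.I * x / 2) = (Real.log (x / 2) : ℂ) + -(Real.pi / 2) * Complex.I := by
    rw [show -Complex.I * (x : ℂ) / 2 = ((x / 2 : ℝ) : ℂ) * (-Complex.I) by push_cast; ring,
      Complex.log_ofReal_mul (by positivity) (by simp), Complex.log_neg_I]
  unfold bI bF besselJ
  rw [hl, ← tsum_mul_left, ← tsum_mul_left]
  apply tsum_congr
  intro k
  have e1 : Complex.exp ((ν + 2 * k) * (Real.log (x / 2) : ℂ)) = Complex.exp (ν * (Real.log (x / 2) : ℂ)) * ((x / 2 : ℂ) ^ 2) ^ k := by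
    rw [add_mul, Complex.exp_add, ← pow_mul]
    congr 1
    rw [show 2 * (k : ℂ) * (Real.log (x / 2) : ℂ) = ((2 * k : ℕ) : ℂ) * (Real.log (x / 2) : ℂ) by push_cast; ring, Complex.exp_nat_mul,
      ← Complex.ofReal_exp, Real.exp_log (by positivity)]
    push_cast
    ring
  have e2 : ((-Complex.I * x) ^ 2 / 4) ^ k = (-1 : ℂ) ^ k * ((x / 2 : ℂ) ^ 2) ^ k := by
    rw [← mul_pow]
    congr 1
    rw [mul_pow, neg_sq, Complex.I_sq]
    ring
  rw [e1, e2, mul_add, Complex.exp_add]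
  ring_nf

lemma besselJ_conj (ν : ℂ) (hν : ν.re = 0) (x : ℝ) : besselJ (-ν) x = (starRingEnd ℂ) (besselJ ν x) := by
  have hc : (starRingEnd ℂ) ν = -ν := by
    apply Complex.ext <;> simp [hν]
  unfold besselJ
  rw [Complex.conj_tsum]
  apply tsum_congr
  intro k
  simp only [map_div₀, map_mul, map_pow, map_neg, map_one, ← Complex.exp_conj, map_add, Complex.conj_ofReal, map_natCast, map_ofNat, hc, ← Complex.Gamma_conj]

lemma b_im (a : ℝ) (ha : a ≠ 0) (x : ℝ) (hx : 0 < x) :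
    ((besselJ (Complex.I * a) x) ^ 2).im =
      -(Real.sinh (Real.pi * a) / (2 * Real.pi ^ 2)) * (bM (Complex.I * a) (-Complex.I * x) ^ 2).im := by
  have hS : Real.sinh (Real.pi * a) ≠ 0 := by
    rw [Ne, Real.sinh_eq_zero]
    exact mul_ne_zero Real.pi_ne_zero ha
  have hp := Real.pi_ne_zero
  have hsin : Complex.sin (Real.pi * (Complex.I * a)) = (Real.sinh (Real.pi * a) : ℂ) * Complex.I := by
    rw [show (Real.pi : ℂ) * (Complex.I * a) = ((Real.pi * a : ℝ) : ℂ) * Complex.I by push_cast; ring,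
      Complex.sin_mul_I, Complex.ofReal_sinh]
  have hE1 : Complex.exp (-(Complex.I * a * Complex.I * (Real.pi / 2))) = (Real.exp (Real.pi * a / 2) : ℂ) := by
    rw [show -(Complex.I * a * Complex.I * (Real.pi / 2)) = -(Complex.I * Complex.I) * (Real.pi * a / 2) by ring, Complex.I_mul_I]
    push_cast
    congr 1
    ring
  have hE2 : Complex.exp (-(-(Complex.I * a) * Complex.I * (Real.pi / 2))) = (Real.exp (-(Real.pi * a / 2)) : ℂ) := by
    rw [show -(-(Complex.I * a) * Complex.I * (Real.pi / 2)) = (Complex.I * Complex.I) * (Real.pi * a / 2) by ring, Complex.I_mul_I]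
    push_cast
    congr 1
    ring
  have hs : Real.sinh (Real.pi * a) = (Real.exp (Real.pi * a / 2) ^ 2 - Real.exp (-(Real.pi * a / 2)) ^ 2) / 2 := by
    rw [Real.sinh_eq, ← Real.exp_nat_mul, ← Real.exp_nat_mul]
    congr 3 <;> · push_cast; ring
  unfold bM
  rw [bI_besselJ _ _ hx, bI_besselJ _ _ hx, besselJ_conj _ (by simp), Complex.Gamma_mul_Gamma_one_sub, hsin, hE1, hE2, mul_pow]
  have hC : ((Real.pi : ℂ) / ((Real.sinh (Real.pi * a) : ℂ) * Complex.I)) ^ 2 = ((-(Real.pi ^ 2 / Real.sinh (Real.pi * a) ^ 2) : ℝ) : ℂ) := by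
    rw [div_pow, mul_pow, Complex.I_sq]
    push_cast
    ring
  rw [hC, Complex.im_ofReal_mul]
  have hq : (((Real.exp (-(Real.pi * a / 2)) : ℂ) * (starRingEnd ℂ) (besselJ (Complex.I * a) x) -
      (Real.exp (Real.pi * a / 2) : ℂ) * besselJ (Complex.I * a) x) ^ 2).im =
      2 * Real.sinh (Real.pi * a) * ((besselJ (Complex.I * a) x) ^ 2).im := by
    rw [hs]
    generalize Real.exp (Real.pi * a / 2) = e1
    generalize Real.exp (-(Real.pi * a / 2)) = e2
    generalize besselJ (Complex.I * a) x = j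
    simp only [pow_two, Complex.mul_im, Complex.sub_im, Complex.sub_re, Complex.mul_re, Complex.conj_re, Complex.conj_im, Complex.ofReal_re, Complex.ofReal_im]
    ring
  rw [hq]
  field_simp


theorem statement17 (n : ℕ) (hn : 1 ≤ n) :
    ∃ L : ℝ, Filter.Tendsto (fun T : ℝ => ∫ x in (0 : ℝ)..T,
        ((besselJ (Complex.I * n / 2) x) ^ 2).im) Filter.atTop (𝓝 L) ∧
      (1 / Real.sinh (Real.pi * n / 2)) * L = -(1 / (2 * Real.cosh (Real.pi * n / 2))) := by
  have hn0 : (n : ℝ) ≠ 0 := by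
    have : n ≠ 0 := by omega
    exact_mod_cast this
  set a : ℝ := (n : ℝ) / 2 with ha
  have ha0 : a ≠ 0 := by rw [ha]; exact div_ne_zero hn0 two_ne_zero
  have hν : Complex.I * (n : ℂ) / 2 = Complex.I * (a : ℂ) := by rw [ha]; push_cast; ring
  have hpa : Real.pi * n / 2 = Real.pi * a := by rw [ha]; ring
  have hre : (Complex.I * (a : ℂ)).re = 0 := by simp
  have hne : Complex.I * (a : ℂ) ≠ 0 := mul_ne_zero Complex.I_ne_zero (by exact_mod_cast ha0)
  have hS : Real.sinh (Real.pi * a) ≠ 0 := by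
    rw [Ne, Real.sinh_eq_zero]
    exact mul_ne_zero Real.pi_ne_zero ha0
  have hC : Real.cosh (Real.pi * a) ≠ 0 := (Real.cosh_pos _).ne'
  have hp := Real.pi_ne_zero
  rw [hν, hpa]
  have h0 : bP (Complex.I * a) 0 = ((Real.pi ^ 2 / Real.cosh (Real.pi * a) : ℝ) : ℂ) := by
    rw [bP_zero _ hre, show (Real.pi : ℂ) * (Complex.I * a) = ((Real.pi * a : ℝ) : ℂ) * Complex.I by push_cast; ring,
      Complex.cos_mul_I]
    push_cast
    rfl
  have hT : ∀ T : ℝ, 0 < T → ∫ x in (0 : ℝ)..T, ((besselJ (Complex.I * a) x) ^ 2).im =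
      -(Real.sinh (Real.pi * a) / (2 * Real.pi ^ 2)) *
        (-Complex.I * (bP (Complex.I * a) (-Complex.I * T) - bP (Complex.I * a) 0)).im := by
    intro T hT
    rw [← bM_integral _ hre hne T hT]
    rw [show ∀ z : ℂ, -Complex.I * (Complex.I * z) = z from fun z => by
      rw [← mul_assoc, neg_mul, Complex.I_mul_I]; ring]
    have h1 := Complex.imCLM.intervalIntegral_comp_comm (bM_intervalIntegrable (Complex.I * a) hre T hT)
    simp only [Complex.imCLM_apply] at h1
    rw [← h1, ← intervalIntegral.integral_const_mul]
    refine intervalIntegral.integral_congr_ae (ae_of_all _ fun x hx => ?_)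
    rw [Set.uIoc_of_le hT.le] at hx
    exact b_im a ha0 x hx.1
  refine ⟨-(Real.sinh (Real.pi * a) / (2 * Real.pi ^ 2)) *
        (-Complex.I * (0 - bP (Complex.I * a) 0)).im, ?_, ?_⟩
  · have hlim := ((bP_lim (Complex.I * a) hre).sub_const (bP (Complex.I * a) 0)).const_mul (-Complex.I)
    have hlim2 := ((Complex.continuous_im.tendsto _).comp hlim).const_mul (-(Real.sinh (Real.pi * a) / (2 * Real.pi ^ 2)))
    refine hlim2.congr' ?_
    filter_upwards [eventually_gt_atTop 0] with T h
    exact (hT T h).symm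
  · rw [h0]
    have : (-Complex.I * (0 - ((Real.pi ^ 2 / Real.cosh (Real.pi * a) : ℝ) : ℂ))).im = Real.pi ^ 2 / Real.cosh (Real.pi * a) := by
      rw [zero_sub, neg_mul_neg, Complex.im_mul_ofReal, Complex.I_im, one_mul]
    rw [this]
    field_simp
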